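/- Suppose c < 1, so ρ* ∈ (0,1/2). Let ρ_0 : ℝ → [ρ*, 1−ρ*] be piecewise continuous on each bounded interval, let v_0(x) = ∫₀ˣ ρ_0(y) dy, and suppose ρ_0 is invariant under the macroscopic dynamics, i.e. for every t > 0 one has v(x,t) − v(0,t) = v_0(x) for all x ∈ ℝ. Then ρ_0(x) ∈ {ρ*, 1−ρ*} for Lebesgue-almost every x; moreover, at every discontinuity point x ≠ 0 of ρ_0 the jump is upward (left limit ρ* and right limit 1−ρ*), a downward jump from 1−ρ* to ρ* being possible only at x = 0; consequently ρ_0 has at most three jump discontinuities. -/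

import Mathlib

/-!
Write `σ = 1 - 2 ρs > 0` for the characteristic speed at density `ρs`; both `ρs` and `1 - ρs` have
flux `c / 4`. Legendre duality gives `λ g₀(w'/λ) ≥ λ ρ (1 - ρ) - ρ w'` for every `ρ ∈ [0, 1]`. For
`ρ ∈ {ρs, 1 - ρs}` the right side may be replaced by `c / 4 - ρ w'` at almost every time, because
`w' = 0` almost everywhere on `{w = 0}` (`countable_zero_deriv_ne`). Integrating, and using that the
slopes of `v0` lie in `[ρs, 1 - ρs]`, no path does better than `v0 x - c t / 4`
(`HeightData.path_le`); at `x = 0` this value is attained by standing still, so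
`v(0, t) = - c t / 4` and invariance says `v(x, t) = v0 x - c t / 4` for all `x`.

Fix `x ≠ 0` and `0 < t < |x|`. Near-optimal paths ending at `x` avoid the origin
(`HeightData.ne_zero_of_near_optimal`), so for them the dual bound is available with every
`ρ ∈ [0, 1]`. Varying `ρ` around `ρs` or `1 - ρs` pins the mean speed to `± σ` and forces equality in
the slope bounds (`HeightData.near_characteristic`). In the limit, `v0` has slope `ρs` on
`[x - σ t, x]` or slope `1 - ρs` on `[x, x + σ t]` (`HeightData.dichotomy`).

Hence at every `x ≠ 0` the left limit of `ρ0` is `ρs` or its right limit is `1 - ρs`. Continuity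
points therefore carry only these two values, hence so do all one-sided limits, and a jump off the
origin has to be upward. After an upward jump the first alternative of the dichotomy is excluded, so
the slope `1 - ρs` persists up to the origin or to infinity (`HeightData.slope_propagates`): each
half-line contains at most one jump, and the origin accounts for the third.
-/

open Filter Set MeasureTheory intervalIntegral

/-- The Legendre conjugate `g₀` of the TASEP flux `f₀(ρ) = ρ(1−ρ)`:
`g₀(x) = −x` for `x ≤ −1`, `(1−x)²/4` for `−1 ≤ x ≤ 1`, and `0` for `x ≥ 1`. -/
noncomputable def g0 (x : ℝ) : ℝ :=
  if x ≤ -1 then -x else if x ≤ 1 then (1 - x) ^ 2 / 4 else 0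

/-- The macroscopic rate profile: `λ(x) = 1` for `x ≠ 0` and `λ(0) = c`. -/
noncomputable def lam (c : ℝ) (x : ℝ) : ℝ := if x = 0 then c else 1

/-- `w` is piecewise `C¹` on `[a,b]`: continuous on `[a,b]` and `C¹` on each cell of
some finite partition `a = p 0 < p 1 < ⋯ < p k = b`. -/
def PiecewiseC1On (w : ℝ → ℝ) (a b : ℝ) : Prop :=
  ContinuousOn w (Set.Icc a b) ∧
    ∃ (k : ℕ) (p : ℕ → ℝ), p 0 = a ∧ p k = b ∧ (∀ i < k, p i < p (i + 1)) ∧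
      ∀ i < k, ContDiffOn ℝ 1 w (Set.Icc (p i) (p (i + 1)))

/-- The running cost `∫₀ᵗ λ(w(s)) g₀(w′(s)/λ(w(s))) ds` of a path `w : [0,t] → ℝ`. -/
noncomputable def pathCost (c t : ℝ) (w : ℝ → ℝ) : ℝ :=
  ∫ s in (0 : ℝ)..t, lam c (w s) * g0 (deriv w s / lam c (w s))

/-- The variational (Hopf–Lax type) solution
`v(x,t) = sup { v₀(w(0)) − ∫₀ᵗ λ(w(s)) g₀(w′(s)/λ(w(s))) ds : w piecewise C¹, w(t) = x }`. -/
noncomputable def vVar (c : ℝ) (v0 : ℝ → ℝ) (x t : ℝ) : ℝ :=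
  sSup { a | ∃ w : ℝ → ℝ, PiecewiseC1On w 0 t ∧ w t = x ∧ a = v0 (w 0) - pathCost c t w }

/-- The optimal control cost
`I(x,t,q) = inf { ∫₀ᵗ λ(w(s)) g₀(w′(s)/λ(w(s))) ds : w piecewise C¹, w(0) = q, w(t) = x }`. -/
noncomputable def Icost (c : ℝ) (x t q : ℝ) : ℝ :=
  sInf { a | ∃ w : ℝ → ℝ, PiecewiseC1On w 0 t ∧ w 0 = q ∧ w t = x ∧ a = pathCost c t w }

/-! ### The running cost -/

lemma g0_ge (ρ z : ℝ) (h0 : 0 ≤ ρ) (h1 : ρ ≤ 1) : ρ * (1 - ρ) - z * ρ ≤ g0 z := by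
  unfold g0
  split_ifs with h h'
  · nlinarith [mul_nonneg (sub_nonneg.2 h1) (by linarith : (0 : ℝ) ≤ -z - ρ)]
  · nlinarith [sq_nonneg ((1 - z) / 2 - ρ)]
  · nlinarith

lemma g0_nonneg (z : ℝ) : 0 ≤ g0 z := by
  simpa using g0_ge 0 z le_rfl zero_le_one

lemma g0_le (z : ℝ) : g0 z ≤ |z| + 1 := by
  unfold g0
  split_ifs with h h'
  · linarith [neg_le_abs z]
  · push Not at h
    nlinarith [abs_nonneg z, mul_nonneg (by linarith : (0 : ℝ) ≤ 1 + z) (sub_nonneg.2 h')]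
  · positivity

lemma measurable_g0 : Measurable g0 := by
  unfold g0
  refine Measurable.ite measurableSet_Iic (by fun_prop) ?_
  exact Measurable.ite measurableSet_Iic (by fun_prop) (by fun_prop)

lemma measurable_lam (c : ℝ) : Measurable (lam c) := by
  unfold lam
  exact Measurable.ite (measurableSet_singleton 0) (by fun_prop) (by fun_prop)

lemma lam_pos {c : ℝ} (hc : 0 < c) (x : ℝ) : 0 < lam c x := by
  unfold lam; split_ifs <;> linarith

lemma lam_le {c : ℝ} (hc : c ≤ 1) (x : ℝ) : lam c x ≤ 1 := by
  unfold lam; split_ifs <;> linarith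

/-- The Lagrangian evaluated along a path: the integrand of `pathCost`. -/
noncomputable def runCost (c : ℝ) (w : ℝ → ℝ) (s : ℝ) : ℝ :=
  lam c (w s) * g0 (deriv w s / lam c (w s))

lemma runCost_nonneg {c : ℝ} (hc : 0 < c) (w : ℝ → ℝ) (s : ℝ) : 0 ≤ runCost c w s :=
  mul_nonneg (lam_pos hc _).le (g0_nonneg _)

lemma runCost_ge {c : ℝ} (hc : 0 < c) (w : ℝ → ℝ) (s ρ : ℝ) (h0 : 0 ≤ ρ) (h1 : ρ ≤ 1) :
    lam c (w s) * (ρ * (1 - ρ)) - ρ * deriv w s ≤ runCost c w s := by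
  have hl := lam_pos hc (w s)
  have h := mul_le_mul_of_nonneg_left (g0_ge ρ (deriv w s / lam c (w s)) h0 h1) hl.le
  refine le_trans (le_of_eq ?_) h
  field_simp

lemma runCost_le {c : ℝ} (hc : 0 < c) (hc1 : c ≤ 1) (w : ℝ → ℝ) (s : ℝ) :
    runCost c w s ≤ |deriv w s| + 1 := by
  have hl := lam_pos hc (w s)
  have h := mul_le_mul_of_nonneg_left (g0_le (deriv w s / lam c (w s))) hl.le
  refine h.trans ?_
  rw [abs_div, abs_of_pos hl, mul_add, mul_div_cancel₀ _ hl.ne']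
  linarith [lam_le hc1 (w s)]

/-- A path spends almost no time at the origin with nonzero velocity: such instants are
isolated zeros of the path. -/
lemma countable_zero_deriv_ne (w : ℝ → ℝ) : {s | w s = 0 ∧ deriv w s ≠ 0}.Countable := by
  refine (countable_setOfPred_isolated_right_within (s := {s | w s = 0})).mono ?_
  rintro s ⟨hs, hd⟩
  refine ⟨hs, ?_⟩
  have h := (differentiableAt_of_deriv_ne_zero hd).hasDerivAt.eventually_ne (c := 0) hd
  rw [eventually_nhdsWithin_iff] at h
  rw [← Filter.empty_mem_iff_bot, mem_nhdsWithin_iff_eventually]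
  filter_upwards [h] with z hz hz'
  exact (hz (ne_of_gt hz'.2) hz'.1).elim

/-! ### Piecewise `C¹` paths -/

lemma exists_cell (p : ℕ → ℝ) (x : ℝ) (hx : x ∉ range p) (h0 : p 0 < x) :
    ∀ k, x < p k → ∃ i < k, x ∈ Ioo (p i) (p (i + 1)) := by
  intro k
  induction k with
  | zero => intro h; linarith
  | succ k ih =>
    intro h
    rcases lt_trichotomy x (p k) with h' | h' | h'
    · obtain ⟨i, hi, hx⟩ := ih h'
      exact ⟨i, by omega, hx⟩
    · exact (hx ⟨k, h'.symm⟩).elim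
    · exact ⟨k, by omega, h', h⟩

/-- Off a countable set, a piecewise `C¹` path is differentiable with bounded derivative. -/
lemma PiecewiseC1On.exists_bound {w : ℝ → ℝ} {a b : ℝ} (h : PiecewiseC1On w a b) :
    ∃ S : Set ℝ, S.Countable ∧ ∃ M : ℝ, ∀ x ∈ Ioo a b \ S,
      DifferentiableAt ℝ w x ∧ |deriv w x| ≤ M := by
  obtain ⟨-, k, p, h0, hk, hlt, hC⟩ := h
  have hb : ∀ i, ∃ B : ℝ, i < k → ∀ x ∈ Icc (p i) (p (i + 1)),
      ‖derivWithin w (Icc (p i) (p (i + 1))) x‖ ≤ B := by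
    intro i
    by_cases hi : i < k
    · obtain ⟨B, hB⟩ := isCompact_Icc.exists_bound_of_continuousOn
        ((hC i hi).continuousOn_derivWithin (uniqueDiffOn_Icc (hlt i hi)) le_rfl)
      exact ⟨B, fun _ => hB⟩
    · exact ⟨0, fun h => (hi h).elim⟩
  choose B hB using hb
  refine ⟨range p, countable_range p, ∑ i ∈ Finset.range k, |B i|, ?_⟩
  rintro x ⟨hx, hxp⟩
  obtain ⟨i, hi, hxi⟩ := exists_cell p x hxp (h0 ▸ hx.1) k (hk ▸ hx.2)
  have hn : Icc (p i) (p (i + 1)) ∈ nhds x := Icc_mem_nhds hxi.1 hxi.2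
  refine ⟨((hC i hi).differentiableOn one_ne_zero).differentiableAt hn, ?_⟩
  have h1 := hB i hi x (Ioo_subset_Icc_self hxi)
  rw [derivWithin_of_mem_nhds hn, Real.norm_eq_abs] at h1
  exact h1.trans ((le_abs_self _).trans
    (Finset.single_le_sum (f := fun i => |B i|) (fun _ _ => abs_nonneg _)
      (Finset.mem_range.2 hi)))

lemma intervalIntegrable_of_bounded_ae {f : ℝ → ℝ} {a b M : ℝ} (hab : a ≤ b)
    (hf : AEStronglyMeasurable f (volume.restrict (Ioo a b)))
    {S : Set ℝ} (hS : S.Countable) (hM : ∀ x ∈ Ioo a b \ S, |f x| ≤ M) :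
    IntervalIntegrable f volume a b := by
  rw [intervalIntegrable_iff_integrableOn_Ioo_of_le hab]
  refine ⟨hf, HasFiniteIntegral.restrict_of_bounded (C := M) measure_Ioo_lt_top ?_⟩
  filter_upwards [ae_restrict_mem measurableSet_Ioo,
    (hS.ae_notMem volume).filter_mono (ae_mono Measure.restrict_le_self)] with x hx hxS
  exact hM x ⟨hx, hxS⟩

lemma PiecewiseC1On.intervalIntegrable_deriv {w : ℝ → ℝ} {t a b : ℝ}
    (h : PiecewiseC1On w 0 t) (ha : 0 ≤ a) (hab : a ≤ b) (hb : b ≤ t) :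
    IntervalIntegrable (deriv w) volume a b := by
  obtain ⟨S, hS, M, hM⟩ := h.exists_bound
  exact intervalIntegrable_of_bounded_ae hab (measurable_deriv w).aestronglyMeasurable hS
    fun x hx => (hM x ⟨Ioo_subset_Ioo ha hb hx.1, hx.2⟩).2

lemma PiecewiseC1On.integral_deriv {w : ℝ → ℝ} {t a b : ℝ}
    (h : PiecewiseC1On w 0 t) (ha : 0 ≤ a) (hab : a ≤ b) (hb : b ≤ t) :
    ∫ s in a..b, deriv w s = w b - w a := by
  obtain ⟨S, hS, M, hM⟩ := h.exists_bound
  refine integral_eq_of_hasDerivAt_off_countable w (deriv w) hS ?_ ?_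
    (h.intervalIntegrable_deriv ha hab hb)
  · rw [uIcc_of_le hab]
    exact h.1.mono (Icc_subset_Icc ha hb)
  · rw [min_eq_left hab, max_eq_right hab]
    exact fun x hx => (hM x ⟨Ioo_subset_Ioo ha hb hx.1, hx.2⟩).1.hasDerivAt

lemma PiecewiseC1On.intervalIntegrable_runCost {c : ℝ} (hc : c ∈ Ioo (0 : ℝ) 1) {w : ℝ → ℝ}
    {t a b : ℝ} (h : PiecewiseC1On w 0 t) (ha : 0 ≤ a) (hab : a ≤ b) (hb : b ≤ t) :
    IntervalIntegrable (runCost c w) volume a b := by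
  obtain ⟨S, hS, M, hM⟩ := h.exists_bound
  refine intervalIntegrable_of_bounded_ae (M := M + 1) hab ?_ hS fun x hx => ?_
  · have hw : AEMeasurable w (volume.restrict (Ioo a b)) :=
      (h.1.mono (Ioo_subset_Icc_self.trans (Icc_subset_Icc ha hb))).aemeasurable measurableSet_Ioo
    have hl : AEMeasurable (fun s => lam c (w s)) (volume.restrict (Ioo a b)) :=
      (measurable_lam c).comp_aemeasurable hw
    exact (hl.mul (measurable_g0.comp_aemeasurable
      ((measurable_deriv w).aemeasurable.div hl))).aestronglyMeasurable
  · rw [abs_of_nonneg (runCost_nonneg hc.1 w x)]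
    have := (hM x ⟨Ioo_subset_Ioo ha hb hx.1, hx.2⟩).2
    linarith [runCost_le hc.1 hc.2.le w x]

/-- A linear lower bound on the Lagrangian integrates to a lower bound on the cost depending
only on the end points of the path. -/
lemma PiecewiseC1On.integral_runCost_ge {c : ℝ} (hc : c ∈ Ioo (0 : ℝ) 1) {w : ℝ → ℝ}
    {t a b κ ρ : ℝ} (h : PiecewiseC1On w 0 t) (ha : 0 ≤ a) (hab : a ≤ b) (hb : b ≤ t)
    {S : Set ℝ} (hS : S.Countable)
    (hκ : ∀ s ∈ Icc a b \ S, κ - ρ * deriv w s ≤ runCost c w s) :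
    κ * (b - a) - ρ * (w b - w a) ≤ ∫ s in a..b, runCost c w s := by
  have hd := h.intervalIntegrable_deriv ha hab hb
  have : ∫ s in a..b, (κ - ρ * deriv w s) = κ * (b - a) - ρ * (w b - w a) := by
    rw [intervalIntegral.integral_sub intervalIntegrable_const (hd.const_mul ρ),
      intervalIntegral.integral_const_mul, h.integral_deriv ha hab hb,
      intervalIntegral.integral_const, smul_eq_mul]
    ring
  rw [← this]
  refine intervalIntegral.integral_mono_ae_restrict hab
    (intervalIntegrable_const.sub (hd.const_mul ρ)) (h.intervalIntegrable_runCost hc ha hab hb) ?_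
  filter_upwards [ae_restrict_mem measurableSet_Icc,
    (hS.ae_notMem volume).filter_mono (ae_mono Measure.restrict_le_self)] with x hx hxS
  exact hκ x ⟨hx, hxS⟩

/-- At a density `ρ` with flux `c / 4` the linear bound is unaffected by the slow site: there
`w' = 0` at almost every time, and standing still costs exactly `c / 4`. -/
lemma PiecewiseC1On.integral_runCost_ge_critical {c : ℝ} (hc : c ∈ Ioo (0 : ℝ) 1) {w : ℝ → ℝ}
    {t a b ρ : ℝ} (h : PiecewiseC1On w 0 t) (ha : 0 ≤ a) (hab : a ≤ b) (hb : b ≤ t)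
    (hρ0 : 0 ≤ ρ) (hρ1 : ρ ≤ 1) (hρ : ρ * (1 - ρ) = c / 4) :
    c / 4 * (b - a) - ρ * (w b - w a) ≤ ∫ s in a..b, runCost c w s := by
  refine h.integral_runCost_ge hc ha hab hb (countable_zero_deriv_ne w) fun s hs => ?_
  by_cases h0 : w s = 0
  · have hd : deriv w s = 0 := by
      by_contra hd
      exact hs.2 ⟨h0, hd⟩
    have := runCost_ge hc.1 w s (1 / 2) (by norm_num) (by norm_num)
    simp only [lam, h0, if_true, hd] at this ⊢
    linarith
  · have := runCost_ge hc.1 w s ρ hρ0 hρ1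
    simpa [lam, h0, hρ] using this

lemma PiecewiseC1On.integral_runCost_ge_of_ne_zero {c : ℝ} (hc : c ∈ Ioo (0 : ℝ) 1)
    {w : ℝ → ℝ} {t ρ : ℝ} (ht : 0 ≤ t) (h : PiecewiseC1On w 0 t)
    (hw : ∀ s ∈ Icc 0 t, w s ≠ 0) (hρ0 : 0 ≤ ρ) (hρ1 : ρ ≤ 1) :
    ρ * (1 - ρ) * t - ρ * (w t - w 0) ≤ pathCost c t w := by
  have := h.integral_runCost_ge hc le_rfl ht le_rfl countable_empty (κ := ρ * (1 - ρ)) (ρ := ρ)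
    fun s hs => by
      have := runCost_ge hc.1 w s ρ hρ0 hρ1
      simpa [lam, hw s hs.1] using this
  simpa [pathCost, runCost] using this

lemma PiecewiseC1On.const {x t : ℝ} (ht : 0 < t) : PiecewiseC1On (fun _ => x) 0 t := by
  refine ⟨continuousOn_const, 1, fun i => i * t, by simp, by simp, ?_, ?_⟩
  · intro i _
    push_cast
    nlinarith
  · exact fun _ _ => contDiffOn_const

lemma pathCost_zero {c t : ℝ} : pathCost c t (fun _ => 0) = c / 4 * t := by
  norm_num [pathCost, lam, g0]
  ring

/-! ### Consequences of invariance for the variational problem -/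

/-- The standing data: `ρs` is the smaller density with flux `c / 4`, and `v0` is a height
function whose slopes lie in `[ρs, 1 - ρs]`. -/
structure HeightData (c ρs : ℝ) (v0 : ℝ → ℝ) : Prop where
  hc : c ∈ Ioo (0 : ℝ) 1
  pos : 0 < ρs
  lt_half : ρs < 1 / 2
  flux : ρs * (1 - ρs) = c / 4
  zero : v0 0 = 0
  lower : ∀ a b, a ≤ b → ρs * (b - a) ≤ v0 b - v0 a
  upper : ∀ a b, a ≤ b → v0 b - v0 a ≤ (1 - ρs) * (b - a)

lemma HeightData.path_le {c ρs : ℝ} {v0 : ℝ → ℝ} (H : HeightData c ρs v0) {w : ℝ → ℝ} {t s : ℝ}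
    (h : PiecewiseC1On w 0 t) (hs : 0 ≤ s) (hst : s ≤ t) :
    v0 (w 0) - ∫ r in (0 : ℝ)..s, runCost c w r ≤ v0 (w s) - c / 4 * s := by
  have h1 := H.pos
  have h2 := H.lt_half
  rcases le_total (w 0) (w s) with hw | hw
  · have := h.integral_runCost_ge_critical H.hc le_rfl hs hst h1.le (by linarith) H.flux
    linarith [H.lower _ _ hw]
  · have := h.integral_runCost_ge_critical (ρ := 1 - ρs) H.hc le_rfl hs hst (by linarith)
      (by linarith) (by linarith [H.flux])
    linarith [H.upper _ _ hw]

lemma HeightData.vVar_zero {c ρs : ℝ} {v0 : ℝ → ℝ} (H : HeightData c ρs v0) {t : ℝ}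
    (ht : 0 < t) : vVar c v0 0 t = -(c / 4 * t) := by
  have hub : ∀ a ∈ { a | ∃ w : ℝ → ℝ, PiecewiseC1On w 0 t ∧ w t = 0 ∧
      a = v0 (w 0) - pathCost c t w }, a ≤ -(c / 4 * t) := by
    rintro a ⟨w, hw, hwt, rfl⟩
    have := H.path_le hw ht.le le_rfl
    rw [hwt, H.zero] at this
    unfold pathCost
    unfold runCost at this
    linarith
  -- the supremum is attained by staying at the origin
  have hmem : -(c / 4 * t) ∈ { a | ∃ w : ℝ → ℝ, PiecewiseC1On w 0 t ∧ w t = 0 ∧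
      a = v0 (w 0) - pathCost c t w } :=
    ⟨fun _ => 0, .const ht, rfl, by rw [pathCost_zero, H.zero]; ring⟩
  exact le_antisymm (csSup_le ⟨_, hmem⟩ hub) (le_csSup ⟨_, hub⟩ hmem)

/-- A path ending at `x` that meets the slow site falls short of the optimal value
`v0 x - c t / 4` by at least `ρs |x| - c t / 4`, which is positive for `0 < t < |x|`. -/
lemma HeightData.ne_zero_of_near_optimal {c ρs : ℝ} {v0 : ℝ → ℝ} (H : HeightData c ρs v0)
    {w : ℝ → ℝ} {t : ℝ} (h : PiecewiseC1On w 0 t)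
    (hopt : v0 (w t) - c / 4 * t - (ρs * |w t| - c / 4 * t) < v0 (w 0) - pathCost c t w) :
    ∀ s ∈ Icc 0 t, w s ≠ 0 := by
  intro s hs h0
  have hc := H.hc
  have h1 := H.path_le h hs.1 hs.2
  rw [h0, H.zero] at h1
  have hsplit : pathCost c t w = (∫ r in (0 : ℝ)..s, runCost c w r) +
      ∫ r in s..t, runCost c w r :=
    (intervalIntegral.integral_add_adjacent_intervals
      (h.intervalIntegrable_runCost hc le_rfl hs.1 hs.2)
      (h.intervalIntegrable_runCost hc hs.1 hs.2 le_rfl)).symm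
  have h2 : 0 ≤ ∫ r in s..t, runCost c w r :=
    intervalIntegral.integral_nonneg hs.2 fun r _ => runCost_nonneg hc.1 w r
  -- the choice of density `1`, of zero flux, bounds the cost of the outward journey by `|x|`
  have h3 := h.integral_runCost_ge hc hs.1 hs.2 le_rfl countable_empty (κ := 0) (ρ := 1)
    fun r _ => by
      have := runCost_ge hc.1 w r 1 zero_le_one le_rfl
      simpa using this
  rw [h0] at h3
  have h4 : 0 ≤ c / 4 * s := mul_nonneg (by linarith [hc.1]) hs.1
  rcases le_total 0 (w t) with hw | hw
  · have := H.lower _ _ hw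
    rw [H.zero, sub_zero] at this
    rw [abs_of_nonneg hw] at hopt
    linarith
  · have := H.upper _ _ hw
    rw [H.zero] at this
    rw [abs_of_nonpos hw] at hopt
    linarith

/-- Near-optimality forces the mean speed of a path off the origin to be close to the
characteristic speed `1 - 2 ρ₁`; here `h` is the deviation of the density from
`ρ₁` in the dual bound, and `t h ^ 2` the matching tolerance. -/
lemma HeightData.near_characteristic {c ρs : ℝ} {v0 : ℝ → ℝ} (H : HeightData c ρs v0)
    {t h ρ₁ x y C : ℝ} (ht : 0 < t) (hh : 0 < h) (hh1 : h ≤ ρ₁) (hh2 : h ≤ 1 - ρ₁)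
    (hflux : ρ₁ * (1 - ρ₁) = c / 4)
    (hcost : ∀ ρ, 0 ≤ ρ → ρ ≤ 1 → ρ * (1 - ρ) * t - ρ * (x - y) ≤ C)
    (hopt : v0 x - c / 4 * t - t * h ^ 2 < v0 y - C)
    (hxy : ρ₁ * (x - y) ≤ v0 x - v0 y) :
    v0 x - v0 (x - (1 - 2 * ρ₁) * t) - ρ₁ * ((1 - 2 * ρ₁) * t) ≤ 5 * t * h := by
  set d := x - y with hd
  have e1 := hcost (ρ₁ + h) (by linarith) (by linarith)
  have e2 := hcost (ρ₁ - h) (by linarith) (by linarith)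
  have e3 := hcost ρ₁ (by linarith) (by linarith)
  rw [hflux] at e3
  have hgap : v0 x - v0 y - ρ₁ * d < t * h ^ 2 := by linarith
  have k1 : (1 - 2 * ρ₁) * t - d ≤ 2 * t * h := by
    have : h * ((1 - 2 * ρ₁) * t - d) ≤ h * (2 * t * h) := by
      have : (ρ₁ + h) * (1 - (ρ₁ + h)) = c / 4 + h * (1 - 2 * ρ₁) - h ^ 2 := by
        rw [← hflux]; ring
      rw [this] at e1
      linarith
    exact le_of_mul_le_mul_left this hh
  have k2 : d - (1 - 2 * ρ₁) * t ≤ 2 * t * h := by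
    have : h * (d - (1 - 2 * ρ₁) * t) ≤ h * (2 * t * h) := by
      have : (ρ₁ - h) * (1 - (ρ₁ - h)) = c / 4 - h * (1 - 2 * ρ₁) - h ^ 2 := by
        rw [← hflux]; ring
      rw [this] at e2
      linarith
    exact le_of_mul_le_mul_left this hh
  have hp := H.pos
  have hl := H.lt_half
  have hth : 0 ≤ t * h := by positivity
  have hth2 : t * h ^ 2 ≤ t * h := by nlinarith
  rcases le_total y (x - (1 - 2 * ρ₁) * t) with hy | hy
  · have := H.lower _ _ hy
    have : 0 ≤ ρs * (x - (1 - 2 * ρ₁) * t - y) := mul_nonneg hp.le (by linarith)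
    have : ρ₁ * (d - (1 - 2 * ρ₁) * t) ≤ 1 * (d - (1 - 2 * ρ₁) * t) :=
      mul_le_mul_of_nonneg_right (by linarith) (by linarith)
    linarith
  · have := H.upper _ _ hy
    have : (1 - ρs) * (y - (x - (1 - 2 * ρ₁) * t)) ≤ 1 * (y - (x - (1 - 2 * ρ₁) * t)) :=
      mul_le_mul_of_nonneg_right (by linarith) (by linarith)
    have : 0 ≤ ρ₁ * ((1 - 2 * ρ₁) * t - d) := mul_nonneg (by linarith) (by linarith)
    linarith

/-- **Characteristic dichotomy.** For an invariant profile, `x ≠ 0` and `t < |x|`, the height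
function is affine of slope `ρs` along the backward characteristic `[x - (1 - 2 ρs) t, x]` or of
slope `1 - ρs` along `[x, x + (1 - 2 ρs) t]`. Only the total increment is recorded: as the slopes
lie in `[ρs, 1 - ρs]`, an extremal increment makes the function affine. -/
lemma HeightData.dichotomy {c ρs : ℝ} {v0 : ℝ → ℝ} (H : HeightData c ρs v0)
    (hinv : ∀ t : ℝ, 0 < t → ∀ x : ℝ, vVar c v0 x t - vVar c v0 0 t = v0 x)
    {x t : ℝ} (ht : 0 < t) (htx : t < |x|) :
    v0 x - v0 (x - (1 - 2 * ρs) * t) = ρs * ((1 - 2 * ρs) * t) ∨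
    v0 (x + (1 - 2 * ρs) * t) - v0 x = (1 - ρs) * ((1 - 2 * ρs) * t) := by
  have hp := H.pos
  have hl := H.lt_half
  have hσ : 0 < (1 - 2 * ρs) * t := mul_pos (by linarith) ht
  have lA := H.lower (x - (1 - 2 * ρs) * t) x (by linarith)
  have uB := H.upper x (x + (1 - 2 * ρs) * t) (by linarith)
  by_contra hcon
  push Not at hcon
  obtain ⟨nA, nB⟩ := hcon
  set α := v0 x - v0 (x - (1 - 2 * ρs) * t) - ρs * ((1 - 2 * ρs) * t) with hα
  set β := (1 - ρs) * ((1 - 2 * ρs) * t) - (v0 (x + (1 - 2 * ρs) * t) - v0 x) with hβ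
  have hα0 : 0 < α := lt_of_le_of_ne (by rw [hα]; linarith) fun h => nA (by linarith)
  have hβ0 : 0 < β := lt_of_le_of_ne (by rw [hβ]; linarith) fun h => nB (by linarith)
  have hγ0 : 0 < ρs * |x| - c / 4 * t := by
    rw [← H.flux]
    nlinarith [mul_lt_mul_of_pos_left htx hp, mul_pos (mul_pos hp hp) ht]
  obtain ⟨h, hh0, hh1, hh2, hh3, hh4⟩ : ∃ h : ℝ, 0 < h ∧ h ≤ ρs ∧ 5 * t * h < α ∧
      5 * t * h < β ∧ t * h ^ 2 ≤ ρs * |x| - c / 4 * t := by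
    have hev : ∀ᶠ h in nhdsWithin (0 : ℝ) (Ioi 0), 5 * t * h < α ∧ 5 * t * h < β ∧
        t * h ^ 2 < ρs * |x| - c / 4 * t ∧ h < ρs := by
      refine nhdsWithin_le_nhds ?_
      have c1 : Continuous fun h : ℝ => 5 * t * h := by fun_prop
      have c2 : Continuous fun h : ℝ => t * h ^ 2 := by fun_prop
      refine (c1.continuousAt.eventually_lt continuousAt_const (by simpa using hα0)).and
        ((c1.continuousAt.eventually_lt continuousAt_const (by simpa using hβ0)).and
        ((c2.continuousAt.eventually_lt continuousAt_const (by simpa using hγ0)).and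
        (eventually_lt_nhds hp)))
    obtain ⟨h, ⟨a1, a2, a3, a4⟩, a5⟩ := (hev.and self_mem_nhdsWithin).exists
    exact ⟨h, a5, a4.le, a1, a2, a3.le⟩
  have hval : vVar c v0 x t = v0 x - c / 4 * t := by
    linarith [hinv t ht x, H.vVar_zero ht]
  obtain ⟨a, ⟨w, hw, rfl, rfl⟩, hlt⟩ : ∃ a ∈ { a | ∃ w : ℝ → ℝ, PiecewiseC1On w 0 t ∧ w t = x ∧
      a = v0 (w 0) - pathCost c t w }, v0 x - c / 4 * t - t * h ^ 2 < a := by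
    refine exists_lt_of_lt_csSup ⟨_, fun _ => x, .const ht, rfl, rfl⟩ ?_
    change _ < vVar c v0 x t
    rw [hval]
    linarith [mul_pos ht (pow_pos hh0 2)]
  have hne := H.ne_zero_of_near_optimal hw (by linarith)
  have hcost := fun ρ h0 h1 => hw.integral_runCost_ge_of_ne_zero (ρ := ρ) H.hc ht.le hne h0 h1
  rcases le_total (w 0) (w t) with hxy | hxy
  · have := H.near_characteristic ht hh0 hh1 (by linarith) H.flux hcost hlt (H.lower _ _ hxy)
    linarith
  · have := H.near_characteristic (ρ₁ := 1 - ρs) ht hh0 (by linarith) (by linarith)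
      (by linarith [H.flux]) hcost hlt (by linarith [H.upper _ _ hxy])
    rw [show w t - (1 - 2 * (1 - ρs)) * t = w t + (1 - 2 * ρs) * t by ring] at this
    linarith

/-- Affine pieces of lowest slope: an extremal increment propagates to subintervals. -/
lemma HeightData.eq_of_lower {c ρs : ℝ} {v0 : ℝ → ℝ} (H : HeightData c ρs v0) {a b u v : ℝ}
    (h : v0 b - v0 a = ρs * (b - a)) (hau : a ≤ u) (huv : u ≤ v) (hvb : v ≤ b) :
    v0 v - v0 u = ρs * (v - u) := by
  linarith [H.lower _ _ hau, H.lower _ _ huv, H.lower _ _ hvb]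

/-- Affine pieces of highest slope. -/
lemma HeightData.eq_of_upper {c ρs : ℝ} {v0 : ℝ → ℝ} (H : HeightData c ρs v0) {a b u v : ℝ}
    (h : v0 b - v0 a = (1 - ρs) * (b - a)) (hau : a ≤ u) (huv : u ≤ v) (hvb : v ≤ b) :
    v0 v - v0 u = (1 - ρs) * (v - u) := by
  linarith [H.upper _ _ hau, H.upper _ _ huv, H.upper _ _ hvb]

/-! ### One-sided derivatives of the height function -/

lemma countable_not_continuousAt {ρ0 : ℝ → ℝ}
    (hpc : ∀ a b : ℝ, ∃ D : Finset ℝ, ∀ x ∈ Icc a b, x ∉ D → ContinuousAt ρ0 x) :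
    {x | ¬ ContinuousAt ρ0 x}.Countable := by
  choose D hD using fun n : ℕ => hpc (-n) n
  refine (countable_iUnion fun n => (D n).countable_toSet).mono fun x hx => ?_
  obtain ⟨n, hn⟩ := exists_nat_ge |x|
  refine mem_iUnion.2 ⟨n, ?_⟩
  by_contra hxD
  exact hx (hD n x (abs_le.1 hn) hxD)

lemma aestronglyMeasurable_of_countable {ρ0 : ℝ → ℝ}
    (h : {x | ¬ ContinuousAt ρ0 x}.Countable) : AEStronglyMeasurable ρ0 volume := by
  have hm : MeasurableSet {x | ¬ ContinuousAt ρ0 x}ᶜ := h.measurableSet.compl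
  have hc : ContinuousOn ρ0 {x | ¬ ContinuousAt ρ0 x}ᶜ := fun x hx =>
    (not_not.1 hx).continuousWithinAt
  have hr := hc.aestronglyMeasurable (μ := volume) hm
  have hae : ∀ᵐ x ∂volume, x ∈ {x | ¬ ContinuousAt ρ0 x}ᶜ := h.ae_notMem volume
  rwa [Measure.restrict_eq_self_of_ae_mem hae] at hr

lemma HeightData.continuous {c ρs : ℝ} {v0 : ℝ → ℝ} (H : HeightData c ρs v0) :
    Continuous v0 := by
  have key : ∀ a b, a ≤ b → |v0 b - v0 a| ≤ |b - a| := by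
    intro a b hab
    have h1 := H.pos
    have h2 := H.lt_half
    have := H.lower a b hab
    have := H.upper a b hab
    rw [abs_of_nonneg (sub_nonneg.2 hab), abs_le]
    constructor <;> nlinarith [mul_nonneg h1.le (sub_nonneg.2 hab)]
  refine (LipschitzWith.of_dist_le_mul (K := 1) fun a b => ?_).continuous
  rw [Real.dist_eq, Real.dist_eq, NNReal.coe_one, one_mul]
  rcases le_total a b with h | h
  · rw [abs_sub_comm, abs_sub_comm a]; exact key a b h
  · exact key b a h

lemma eq_of_affine_left {v0 : ℝ → ℝ} {x a m l : ℝ} (hax : a < x)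
    (hd : HasDerivWithinAt v0 l (Iic x) x)
    (h : ∀ u, a ≤ u → u ≤ x → v0 x - v0 u = m * (x - u)) : l = m := by
  have h1 : HasDerivWithinAt (fun u => v0 x + m * (u - x)) m (Iic x) x := by
    simpa using (((hasDerivWithinAt_id x (Iic x)).sub_const x).const_mul m).const_add (v0 x)
  have h2 : HasDerivWithinAt v0 m (Iic x) x := by
    refine h1.congr_of_eventuallyEq ?_ (by simp)
    filter_upwards [self_mem_nhdsWithin, mem_nhdsWithin_of_mem_nhds (Ici_mem_nhds hax)]
      with u hu hu'
    linarith [h u hu' hu]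
  exact (uniqueDiffWithinAt_Iic x).eq_deriv _ hd h2

lemma eq_of_affine_right {v0 : ℝ → ℝ} {x b m r : ℝ} (hxb : x < b)
    (hd : HasDerivWithinAt v0 r (Ici x) x)
    (h : ∀ u, x ≤ u → u ≤ b → v0 u - v0 x = m * (u - x)) : r = m := by
  have h1 : HasDerivWithinAt (fun u => v0 x + m * (u - x)) m (Ici x) x := by
    simpa using (((hasDerivWithinAt_id x (Ici x)).sub_const x).const_mul m).const_add (v0 x)
  have h2 : HasDerivWithinAt v0 m (Ici x) x := by
    refine h1.congr_of_eventuallyEq ?_ (by simp)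
    filter_upwards [self_mem_nhdsWithin, mem_nhdsWithin_of_mem_nhds (Iic_mem_nhds hxb)]
      with u hu hu'
    linarith [h u hu hu']
  exact (uniqueDiffWithinAt_Ici x).eq_deriv _ hd h2

/-- The infinitesimal form of the characteristic dichotomy, in terms of one-sided slopes. -/
lemma HeightData.slope_dichotomy {c ρs : ℝ} {v0 : ℝ → ℝ} (H : HeightData c ρs v0)
    (hinv : ∀ t : ℝ, 0 < t → ∀ x : ℝ, vVar c v0 x t - vVar c v0 0 t = v0 x)
    {x l r : ℝ} (hx : x ≠ 0) (hl : HasDerivWithinAt v0 l (Iic x) x)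
    (hr : HasDerivWithinAt v0 r (Ici x) x) :
    l = ρs ∨ r = 1 - ρs ∧ ∃ b > x, v0 b - v0 x = (1 - ρs) * (b - x) := by
  have hx' := abs_pos.2 hx
  have hσ : 0 < (1 - 2 * ρs) * (|x| / 2) := mul_pos (by linarith [H.lt_half]) (by linarith)
  rcases H.dichotomy hinv (x := x) (t := |x| / 2) (by linarith) (by linarith) with h | h
  · refine Or.inl (eq_of_affine_left (a := x - (1 - 2 * ρs) * (|x| / 2)) (by linarith) hl
      fun u hu hux => H.eq_of_lower (by rw [h]; ring) hu hux le_rfl)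
  · refine Or.inr ⟨eq_of_affine_right (b := x + (1 - 2 * ρs) * (|x| / 2)) (by linarith) hr
      fun u hu hux => H.eq_of_upper (by rw [h]; ring) le_rfl hu hux,
      x + (1 - 2 * ρs) * (|x| / 2), by linarith, by rw [h]; ring⟩

/-- Once the slope `1 - ρs` is reached on one side of the origin, it persists to the right as
long as the origin is not met. The proof is by continuous induction: at the right end of an
affine piece of slope `1 - ρs` only the second alternative of the dichotomy is possible. -/
lemma HeightData.slope_propagates {c ρs : ℝ} {v0 : ℝ → ℝ} (H : HeightData c ρs v0)
    (hinv : ∀ t : ℝ, 0 < t → ∀ x : ℝ, vVar c v0 x t - vVar c v0 0 t = v0 x)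
    {l r : ℝ → ℝ} (hl : ∀ x, HasDerivWithinAt v0 (l x) (Iic x) x)
    (hr : ∀ x, HasDerivWithinAt v0 (r x) (Ici x) x)
    {x y : ℝ} (hxy : x < y) (h0 : (0 : ℝ) ∉ Icc x y)
    (hstart : ∃ b > x, v0 b - v0 x = (1 - ρs) * (b - x)) : l y = 1 - ρs := by
  have hleft : ∀ z, x < z → v0 z - v0 x = (1 - ρs) * (z - x) → l z = 1 - ρs :=
    fun z hxz hz => eq_of_affine_left hxz (hl z)
      fun u hu huz => H.eq_of_upper hz hu huz le_rfl
  refine hleft y hxy ?_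
  have hclosed : IsClosed ({z | v0 z - v0 x = (1 - ρs) * (z - x)} ∩ Icc x y) := by
    refine IsClosed.inter (isClosed_eq ?_ ?_) isClosed_Icc
    · exact H.continuous.sub continuous_const
    · fun_prop
  refine hclosed.Icc_subset_of_forall_exists_gt (by simp) ?_ ⟨hxy.le, le_rfl⟩
  rintro z ⟨hz, hxz, hzy⟩ y' hy'
  obtain ⟨b, hb, hbz⟩ : ∃ b > z, v0 b - v0 z = (1 - ρs) * (b - z) := by
    rcases hxz.eq_or_lt with rfl | hxz
    · exact hstart
    · have hz0 : z ≠ 0 := by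
        rintro rfl
        exact h0 ⟨hxz.le, hzy.le⟩
      rcases H.slope_dichotomy hinv hz0 (hl z) (hr z) with h | h
      · linarith [hleft z hxz hz, H.lt_half]
      · exact h.2
  have hm : z < min b y' := lt_min hb hy'
  refine ⟨min b y', ?_, hm, min_le_right _ _⟩
  have := H.eq_of_upper hbz le_rfl hm.le (min_le_left _ _)
  have hz' : v0 z - v0 x = (1 - ρs) * (z - x) := hz
  change v0 (min b y') - v0 x = (1 - ρs) * (min b y' - x)
  linarith

/-! ### The classification -/

open Function in
/-- Corollary 2.2: a macroscopically invariant profile `ρ₀` with values in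
`[ρ*, 1−ρ*]`, piecewise continuous on bounded intervals, takes a.e. only the values
`ρ*` and `1−ρ*`; any jump away from the origin is upward (from `ρ*` to `1−ρ*`),
downward jumps being possible only at `0`; and there are at most three jumps. -/
theorem invariant_profile_classification
    (c : ℝ) (hc : c ∈ Set.Ioo (0 : ℝ) 1)
    (ρs : ℝ) (hρs : ρs = 1 / 2 - Real.sqrt (1 - c) / 2)
    (ρ0 : ℝ → ℝ) (hrange : ∀ x, ρ0 x ∈ Set.Icc ρs (1 - ρs))
    (hpc : ∀ a b : ℝ, ∃ D : Finset ℝ,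
      ∀ x ∈ Set.Icc a b, x ∉ D → ContinuousAt ρ0 x)
    (hleft : ∀ x : ℝ, Tendsto ρ0 (nhdsWithin x (Set.Iio x)) (nhds (leftLim ρ0 x)))
    (hright : ∀ x : ℝ, Tendsto ρ0 (nhdsWithin x (Set.Ioi x)) (nhds (rightLim ρ0 x)))
    (v0 : ℝ → ℝ) (hv0 : ∀ x, v0 x = ∫ y in (0 : ℝ)..x, ρ0 y)
    (hinv : ∀ t : ℝ, 0 < t → ∀ x : ℝ, vVar c v0 x t - vVar c v0 0 t = v0 x) :
    (∀ᵐ x ∂(volume : Measure ℝ), ρ0 x = ρs ∨ ρ0 x = 1 - ρs) ∧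
    (∀ x : ℝ, x ≠ 0 → leftLim ρ0 x ≠ rightLim ρ0 x →
      leftLim ρ0 x = ρs ∧ rightLim ρ0 x = 1 - ρs) ∧
    ({ x : ℝ | leftLim ρ0 x ≠ rightLim ρ0 x }.Finite ∧
      { x : ℝ | leftLim ρ0 x ≠ rightLim ρ0 x }.ncard ≤ 3) := by
  have hsq : Real.sqrt (1 - c) ^ 2 = 1 - c := Real.sq_sqrt (by linarith [hc.2])
  have hsq0 : 0 < Real.sqrt (1 - c) := Real.sqrt_pos.2 (by linarith [hc.2])
  have hsq1 : Real.sqrt (1 - c) < 1 := by nlinarith [hc.1]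
  have hpos : 0 < ρs := by linarith
  have hhalf : ρs < 1 / 2 := by linarith
  have hcount := countable_not_continuousAt hpc
  have hmeas := aestronglyMeasurable_of_countable hcount
  have hint : ∀ a b, IntervalIntegrable ρ0 volume a b := by
    have : ∀ a b, a ≤ b → IntervalIntegrable ρ0 volume a b := fun a b hab =>
      intervalIntegrable_of_bounded_ae (M := 1) hab hmeas.restrict countable_empty fun x _ => by
        rw [abs_le]
        constructor <;> linarith [(hrange x).1, (hrange x).2]
    intro a b
    rcases le_total a b with h | h
    · exact this a b h
    · exact (this b a h).symm
  have hinc : ∀ a b, v0 b - v0 a = ∫ y in a..b, ρ0 y := fun a b => by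
    rw [hv0, hv0, intervalIntegral.integral_interval_sub_left (hint 0 b) (hint 0 a)]
  have H : HeightData c ρs v0 :=
    { hc := hc
      pos := hpos
      lt_half := hhalf
      flux := by rw [hρs]; linarith
      zero := by simp [hv0]
      lower := fun a b hab => by
        rw [hinc]
        have := intervalIntegral.integral_mono_on hab intervalIntegrable_const (hint a b)
          fun x _ => (hrange x).1
        rw [intervalIntegral.integral_const, smul_eq_mul] at this
        linarith
      upper := fun a b hab => by
        rw [hinc]
        have := intervalIntegral.integral_mono_on hab (hint a b) intervalIntegrable_const
          fun x _ => (hrange x).2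
        rw [intervalIntegral.integral_const, smul_eq_mul] at this
        linarith }
  have hv0' : v0 = fun x => ∫ y in (0 : ℝ)..x, ρ0 y := funext hv0
  have hdl : ∀ x, HasDerivWithinAt v0 (leftLim ρ0 x) (Iic x) x := fun x => by
    rw [hv0']
    refine integral_hasDerivWithinAt_of_tendsto_ae_right (hint 0 x) (t := Iic x)
      hmeas.stronglyMeasurableAtFilter ((hleft x).mono_left ?_)
    -- the filter `𝓝[≤] x` becomes `𝓝[<] x` once the null set `{x}` is discarded
    rw [← Iic_sdiff_right, sdiff_eq, nhdsWithin_inter']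
    exact inf_le_inf_left _ (le_principal_iff.2 ((countable_singleton x).ae_notMem volume))
  have hdr : ∀ x, HasDerivWithinAt v0 (rightLim ρ0 x) (Ici x) x := fun x => by
    rw [hv0']
    exact integral_hasDerivWithinAt_of_tendsto_ae_right (hint 0 x) (t := Ioi x)
      hmeas.stronglyMeasurableAtFilter ((hright x).mono_left inf_le_left)
  have hcont : ∀ x, x ≠ 0 → ContinuousAt ρ0 x → ρ0 x = ρs ∨ ρ0 x = 1 - ρs := by
    intro x hx hxc
    have h1 : leftLim ρ0 x = ρ0 x :=
      tendsto_nhds_unique (hleft x) (hxc.mono_left nhdsWithin_le_nhds)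
    have h2 : rightLim ρ0 x = ρ0 x :=
      tendsto_nhds_unique (hright x) (hxc.mono_left nhdsWithin_le_nhds)
    rcases H.slope_dichotomy hinv hx (hdl x) (hdr x) with h | h
    · exact Or.inl (h1 ▸ h)
    · exact Or.inr (h2 ▸ h.1)
  have hev : ∀ x, ∀ᶠ z in nhdsWithin x {x}ᶜ, ρ0 z ∈ ({ρs, 1 - ρs} : Set ℝ) := by
    intro x
    obtain ⟨D, hD⟩ := hpc (x - 1) (x + 1)
    have hfin : (((insert 0 D : Finset ℝ) : Set ℝ) \ {x}).Finite :=
      (Finset.finite_toSet _).subset sdiff_subset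
    filter_upwards [self_mem_nhdsWithin,
      mem_nhdsWithin_of_mem_nhds (hfin.isClosed.isOpen_compl.mem_nhds (by simp)),
      mem_nhdsWithin_of_mem_nhds (Icc_mem_nhds (by linarith : x - 1 < x) (by linarith : x < x + 1))]
      with z hz1 hz2 hz3
    have hz4 : z ∉ insert 0 D := fun h => hz2 ⟨h, hz1⟩
    rw [Finset.mem_insert, not_or] at hz4
    exact hcont z hz4.1 (hD z hz3 hz4.2)
  have hclosed : IsClosed ({ρs, 1 - ρs} : Set ℝ) := (toFinite _).isClosed
  have hevR : ∀ x, ∀ᶠ z in nhdsWithin x (Ioi x), ρ0 z ∈ ({ρs, 1 - ρs} : Set ℝ) := fun x =>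
    (hev x).filter_mono (nhdsWithin_mono x fun z hz => ne_of_gt hz)
  have hL : ∀ x, leftLim ρ0 x = ρs ∨ leftLim ρ0 x = 1 - ρs := fun x =>
    hclosed.mem_of_tendsto (hleft x)
      ((hev x).filter_mono (nhdsWithin_mono x fun z hz => ne_of_lt hz))
  have hR : ∀ x, rightLim ρ0 x = ρs ∨ rightLim ρ0 x = 1 - ρs := fun x =>
    hclosed.mem_of_tendsto (hright x) (hevR x)
  have hjump : ∀ x : ℝ, x ≠ 0 → leftLim ρ0 x ≠ rightLim ρ0 x →
      leftLim ρ0 x = ρs ∧ rightLim ρ0 x = 1 - ρs := by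
    intro x hx hne
    rcases H.slope_dichotomy hinv hx (hdl x) (hdr x) with h | ⟨h, -⟩
    · refine ⟨h, (hR x).resolve_left fun h' => hne (h.trans h'.symm)⟩
    · refine ⟨(hL x).resolve_right fun h' => hne (h'.trans h.symm), h⟩
  have hstart : ∀ x, rightLim ρ0 x = 1 - ρs →
      ∃ b > x, v0 b - v0 x = (1 - ρs) * (b - x) := by
    intro x hx
    have hgt : ∀ᶠ z in nhdsWithin x (Ioi x), ρs < ρ0 z :=
      (hright x).eventually_const_lt (by rw [hx]; linarith)
    have heq : ∀ᶠ z in nhdsWithin x (Ioi x), ρ0 z = 1 - ρs := by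
      filter_upwards [hgt, hevR x] with z hz1 hz2
      exact hz2.resolve_left (ne_of_gt hz1)
    obtain ⟨b, hb, hbs⟩ := (mem_nhdsGT_iff_exists_Ioc_subset).1 heq
    refine ⟨b, hb, ?_⟩
    rw [hinc, intervalIntegral.integral_congr_ae (g := fun _ => 1 - ρs),
      intervalIntegral.integral_const, smul_eq_mul, mul_comm]
    refine ae_of_all _ fun z hz => hbs ?_
    rwa [uIoc_of_le (le_of_lt hb)] at hz
  have hone : ∀ x y, x < y → (0 : ℝ) ∉ Icc x y → leftLim ρ0 x ≠ rightLim ρ0 x →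
      leftLim ρ0 y = rightLim ρ0 y := by
    intro x y hxy h0 hx
    by_contra hy
    have hx0 : x ≠ 0 := by rintro rfl; exact h0 ⟨le_rfl, hxy.le⟩
    have hy0 : y ≠ 0 := by rintro rfl; exact h0 ⟨hxy.le, le_rfl⟩
    have h1 := H.slope_propagates hinv hdl hdr hxy h0 (hstart x (hjump x hx0 hx).2)
    have h2 := (hjump y hy0 hy).1
    linarith
  refine ⟨?_, hjump, ?_⟩
  · filter_upwards [hcount.ae_notMem volume, (countable_singleton (0 : ℝ)).ae_notMem volume]
      with x hx hx0
    exact hcont x hx0 (not_not.1 hx)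
  · set J := { x : ℝ | leftLim ρ0 x ≠ rightLim ρ0 x } with hJ
    have hsubP : (J ∩ Ioi 0).Subsingleton := by
      have : ∀ x ∈ J ∩ Ioi 0, ∀ y ∈ J ∩ Ioi 0, ¬ x < y := fun x hx y hy hxy =>
        hy.1 (hone x y hxy (fun h => absurd h.1 (not_le.2 hx.2)) hx.1)
      exact fun x hx y hy => le_antisymm (not_lt.1 (this y hy x hx)) (not_lt.1 (this x hx y hy))
    have hsubN : (J ∩ Iio 0).Subsingleton := by
      have : ∀ x ∈ J ∩ Iio 0, ∀ y ∈ J ∩ Iio 0, ¬ x < y := fun x hx y hy hxy =>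
        hy.1 (hone x y hxy (fun h => absurd h.2 (not_le.2 hy.2)) hx.1)
      exact fun x hx y hy => le_antisymm (not_lt.1 (this y hy x hx)) (not_lt.1 (this x hx y hy))
    have hcov : J ⊆ insert 0 ((J ∩ Ioi 0) ∪ (J ∩ Iio 0)) := by
      intro x hx
      rcases lt_trichotomy x 0 with h | h | h
      · exact Or.inr (Or.inr ⟨hx, h⟩)
      · exact Or.inl h
      · exact Or.inr (Or.inl ⟨hx, h⟩)
    have hfin : (insert 0 ((J ∩ Ioi 0) ∪ (J ∩ Iio 0))).Finite :=
      (hsubP.finite.union hsubN.finite).insert 0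
    refine ⟨hfin.subset hcov, (ncard_le_ncard hcov hfin).trans ?_⟩
    have h1 := ncard_insert_le 0 ((J ∩ Ioi 0) ∪ (J ∩ Iio 0))
    have h2 := ncard_union_le (J ∩ Ioi 0) (J ∩ Iio 0)
    have h3 : (J ∩ Ioi 0).ncard ≤ 1 :=
      (ncard_le_one hsubP.finite).2 fun a ha b hb => hsubP ha hb
    have h4 : (J ∩ Iio 0).ncard ≤ 1 :=
      (ncard_le_one hsubN.finite).2 fun a ha b hb => hsubN ha hb
    omega
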